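/- Let Λ be a cyclic Nakayama algebra with associated sets S = {S_{k_2},…,S_{k_{2r}}} and S' = {S_{k_2+1},…,S_{k_{2r}+1}}, and let X be an indecomposable Λ-module. Then: (i) for every i ≥ 1 with Ω^i(X) ≠ 0, soc Ω^i(X) ∈ S up to isomorphism; (ii) for every i ≥ 2 with Ω^i(X) ≠ 0, top Ω^i(X) ∈ S' up to isomorphism. -/

import Mathlib

/-!
Every finitely generated indecomposable `X` is uniserial with some simple top `S a`, so by
uniqueness of projective covers of `S a` its projective cover is `P a`, which is itself uniserial.

* A nonzero `Ω X` embeds in the uniserial module `P a`, so it has the same socle, which is one of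
  the `S (kEven j)`. Being a nonzero submodule of a uniserial module, `Ω X` is again indecomposable,
  so the statement on socles passes to all higher syzygies.
* For a nonzero `Y = Ω Z` with `Z = Ω X`, let `f : P b → Z` be the projective cover and let
  `V = f ⁻¹ (soc Z)`. Then `Y ⊆ V` and `V / Y ≅ soc Z ≅ S (kEven j)` is simple, so `Y` is the
  radical of the uniserial module `V`, whose top is `S (kEven j)`. As the arrows go from `i` to
  `i + 1`, the top of `Y = rad V` is `S (kEven j + 1)`.
-/

/-!
Common definitions: Igusa–Todorov φ-function, syzygies, and cyclic Nakayama
algebras presented by monomial relations, following E. Sen,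
"The φ-dimension of cyclic Nakayama algebras".
-/

noncomputable section

namespace PhiDim

variable (Λ : Type) [Ring Λ]

/-- A module is *uniserial* if its submodules are totally ordered by inclusion. -/
def IsUniserial (M : ModuleCat.{0} Λ) : Prop :=
  ∀ N₁ N₂ : Submodule Λ M, N₁ ≤ N₂ ∨ N₂ ≤ N₁

/-- A module is *indecomposable* if it is nonzero and admits no nontrivial
direct sum decomposition. -/
def Indec (M : ModuleCat.{0} Λ) : Prop :=
  Nontrivial M ∧ ∀ N N' : Submodule Λ M, IsCompl N N' → N = ⊥ ∨ N' = ⊥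

/-- `X` is (isomorphic to) a direct summand of `M`. -/
def IsSummand (X M : ModuleCat.{0} Λ) : Prop :=
  ∃ N N' : Submodule Λ M, IsCompl N N' ∧ Nonempty (X ≃ₗ[Λ] N)

/-- `f : P → M` is a projective cover: `P` is projective, `f` is surjective and
its kernel is superfluous in `P`. -/
def IsProjCover {P M : ModuleCat.{0} Λ} (f : P →ₗ[Λ] M) : Prop :=
  Module.Projective Λ P ∧ Function.Surjective f ∧
    ∀ N : Submodule Λ P, N ⊔ LinearMap.ker f = ⊤ → N = ⊤

/-- `Y` is (isomorphic to) the first syzygy `Ω M`, i.e. the kernel of a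
projective cover of `M`. -/
def IsSyzygy (Y M : ModuleCat.{0} Λ) : Prop :=
  ∃ (P : ModuleCat.{0} Λ) (f : P →ₗ[Λ] M), IsProjCover Λ f ∧
    Nonempty (Y ≃ₗ[Λ] LinearMap.ker f)

/-- `Y` is (isomorphic to) the `n`-th syzygy `Ω^n M`. -/
def IsNthSyzygy : ℕ → ModuleCat.{0} Λ → ModuleCat.{0} Λ → Prop
  | 0, Y, M => Nonempty (Y ≃ₗ[Λ] M)
  | n + 1, Y, M => ∃ Z : ModuleCat.{0} Λ, IsSyzygy Λ Z M ∧ IsNthSyzygy n Y Z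

/-- `M` is `Ω`-periodic: `Ω^k M ≅ M` for some `k ≥ 1`. -/
def IsPeriodic (M : ModuleCat.{0} Λ) : Prop :=
  ∃ k : ℕ, 1 ≤ k ∧ IsNthSyzygy Λ k M M

/-- Projective dimension at most `n` (via minimal projective resolutions:
the `n`-th syzygy is projective). -/
def PdimLE (M : ModuleCat.{0} Λ) (n : ℕ) : Prop :=
  ∃ Y : ModuleCat.{0} Λ, IsNthSyzygy Λ n Y M ∧ Module.Projective Λ Y

/-- `M` has infinite projective dimension. -/
def HasInfinitePdim (M : ModuleCat.{0} Λ) : Prop :=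
  ¬ ∃ n : ℕ, PdimLE Λ M n

/-- The (left) global dimension is at most `n`: every finitely generated module
has projective dimension at most `n`. -/
def GlobalDimLE (n : ℕ) : Prop :=
  ∀ M : ModuleCat.{0} Λ, Module.Finite Λ M → PdimLE Λ M n

/-- `Λ` has infinite global dimension. -/
def HasInfiniteGlobalDim : Prop := ¬ ∃ n : ℕ, GlobalDimLE Λ n

/-- `M` has composition length `n`. -/
def HasLength (M : ModuleCat.{0} Λ) (n : ℕ) : Prop :=
  ∃ s : CompositionSeries (Submodule Λ M), s.head = ⊥ ∧ s.last = ⊤ ∧ s.length = n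

/-- The socle of a uniserial module: the smallest nonzero submodule. -/
def socle (M : Type) [AddCommGroup M] [Module Λ M] : Submodule Λ M :=
  sInf {N : Submodule Λ M | N ≠ ⊥}

/-- The radical of a uniserial (local) module: the largest proper submodule. -/
def radical (M : Type) [AddCommGroup M] [Module Λ M] : Submodule Λ M :=
  sSup {N : Submodule Λ M | N ≠ ⊤}

/-- `soc M ≅ T`. -/
def SocIso (M T : ModuleCat.{0} Λ) : Prop :=
  Nonempty (socle Λ M ≃ₗ[Λ] T)

/-- `top M = M / rad M ≅ T`. -/
def TopIso (M T : ModuleCat.{0} Λ) : Prop :=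
  Nonempty ((M ⧸ radical Λ M) ≃ₗ[Λ] T)

/-- `T` is a composition factor (a simple subquotient) of `M`. -/
def IsCompFactorOf (T M : ModuleCat.{0} Λ) : Prop :=
  ∃ (N₁ : Submodule Λ M) (N₀ : Submodule Λ N₁),
    Nonempty ((N₁ ⧸ N₀) ≃ₗ[Λ] T)

/-- The number of composition factors of a composition series `s` of `M`
isomorphic to `T`. -/
def factorCount (M : ModuleCat.{0} Λ) (s : CompositionSeries (Submodule Λ M))
    (T : ModuleCat.{0} Λ) : ℕ :=
  Nat.card {i : Fin s.length //
    Nonempty ((s i.succ ⧸ Submodule.comap (s i.succ).subtype (s i.castSucc)) ≃ₗ[Λ] T)}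

/-! ### The Igusa–Todorov function φ -/

/-- Finitely generated modules. -/
def FGMod := {M : ModuleCat.{0} Λ // Module.Finite Λ M}

/-- Generators of the relations defining `K₀`: `[C] - [A] - [B]` for `C ≅ A ⊕ B`,
and `[P]` for `P` projective. -/
def K0RelSet : Set (FreeAbelianGroup (FGMod Λ)) :=
  {x | ∃ A B C : FGMod Λ, Nonempty ((C.1 : Type) ≃ₗ[Λ] ((A.1 : Type) × (B.1 : Type))) ∧
        x = FreeAbelianGroup.of C - FreeAbelianGroup.of A - FreeAbelianGroup.of B} ∪
  {x | ∃ P : FGMod Λ, Module.Projective Λ P.1 ∧ x = FreeAbelianGroup.of P}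

def K0Rel : AddSubgroup (FreeAbelianGroup (FGMod Λ)) :=
  AddSubgroup.closure (K0RelSet Λ)

/-- `K₀`: the free abelian group on finitely generated modules, modulo
`[A ⊕ B] = [A] + [B]` and `[P] = 0` for projective `P`. -/
def K0 := FreeAbelianGroup (FGMod Λ) ⧸ K0Rel Λ

instance : AddCommGroup (K0 Λ) := QuotientAddGroup.Quotient.addCommGroup _

/-- The class `[M]` of a finitely generated module in `K₀`. -/
def classOf (M : FGMod Λ) : K0 Λ := QuotientAddGroup.mk (FreeAbelianGroup.of M)

/-- Generators of the subgroup `L^t ⟨add M⟩` of `K₀`: classes of `t`-th syzygies of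
the indecomposable direct summands of `M`. -/
def addGens (M : ModuleCat.{0} Λ) (t : ℕ) : Set (K0 Λ) :=
  {k | ∃ X : ModuleCat.{0} Λ, Indec Λ X ∧ IsSummand Λ X M ∧
        ∃ Y : FGMod Λ, IsNthSyzygy Λ t Y.1 X ∧ k = classOf Λ Y}

/-- The rank of `L^t ⟨add M⟩`. -/
def syzygyRank (M : ModuleCat.{0} Λ) (t : ℕ) : Cardinal :=
  Module.rank ℤ (AddSubgroup.closure (addGens Λ M t))

/-- The Igusa–Todorov function
`φ(M) = min { t | rank L^t ⟨add M⟩ = rank L^{t+j} ⟨add M⟩ for all j ≥ 1 }`. -/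
def phi (M : ModuleCat.{0} Λ) : ℕ :=
  sInf {t : ℕ | ∀ j : ℕ, 1 ≤ j → syzygyRank Λ M (t + j) = syzygyRank Λ M t}

/-- `φdim Λ = sup { φ(M) | M a finitely generated Λ-module }`. -/
def phiDim : ℕ∞ := ⨆ M : FGMod Λ, (phi Λ M.1 : ℕ∞)

/-- Isomorphism of modules as a setoid on `ModuleCat Λ`. -/
def isoSetoid : Setoid (ModuleCat.{0} Λ) where
  r M N := Nonempty (M ≃ₗ[Λ] N)
  iseqv := ⟨fun M => ⟨LinearEquiv.refl Λ M⟩, fun ⟨e⟩ => ⟨e.symm⟩, fun ⟨e⟩ ⟨f⟩ => ⟨e.trans f⟩⟩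

/-- `α(X)`: the number of pairwise non-isomorphic, non-projective, indecomposable
direct summands of `X`. -/
def alpha (X : ModuleCat.{0} Λ) : ℕ :=
  Nat.card {c : Quotient (isoSetoid Λ) // ∃ Y : ModuleCat.{0} Λ,
    Quotient.mk (isoSetoid Λ) Y = c ∧ Indec Λ Y ∧ ¬ Module.Projective Λ Y ∧ IsSummand Λ Y X}

/-! ### Cyclic Nakayama algebras presented by monomial relations -/

/-- A cyclic Nakayama artin algebra `Λ` on `N ≥ 3` vertices, presented by an
irredundant system of `r` monomial relations `α_{k_{2j}} ⋯ α_{k_{2j-1}} = 0`.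

* `S i` (for `i : ZMod N`) are the simple modules attached to the vertices of the
  cyclic quiver, `P i` a projective cover of `S i`, and `c i` the composition length
  of `P i` (the Kupisch series).
* `layer` expresses that the arrows of the quiver are exactly `α_i : i → i+1`:
  the radical of an indecomposable module with top `S i`, when nonzero, has top `S (i+1)`.
* `kOdd j = k_{2j-1}` and `kEven j = k_{2j}` record the start and end indices of the
  `j`-th relation; irredundancy and completeness of the system of relations is recorded
  by `relation_starts` (the chain of inclusions `P_v ↪ P_{v-1}` breaks exactly at the
  starting vertices of the relations); `relation_ends` says that the `j`-th relation
  is a path from `k_{2j-1}` to `k_{2j} + 1` consisting of `c (k_{2j-1})` arrows. -/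
structure CyclicNakayama (R : Type) (Λ : Type) [CommRing R] [Ring Λ] [Algebra R Λ] where
  artinianBase : IsArtinianRing R
  finiteAlgebra : Module.Finite R Λ
  N : ℕ
  three_le_N : 3 ≤ N
  r : ℕ
  one_le_r : 1 ≤ r
  S : ZMod N → ModuleCat.{0} Λ
  S_simple : ∀ i, IsSimpleModule Λ (S i)
  S_complete : ∀ T : ModuleCat.{0} Λ, IsSimpleModule Λ T → ∃ i, Nonempty (T ≃ₗ[Λ] S i)
  S_distinct : ∀ i j, Nonempty (S i ≃ₗ[Λ] S j) → i = j
  nakayama : ∀ M : ModuleCat.{0} Λ, Module.Finite Λ M → Indec Λ M → IsUniserial Λ M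
  P : ZMod N → ModuleCat.{0} Λ
  P_finite : ∀ i, Module.Finite Λ (P i)
  P_projective : ∀ i, Module.Projective Λ (P i)
  P_cover : ∀ i, ∃ f : P i →ₗ[Λ] S i, IsProjCover Λ f
  c : ZMod N → ℕ
  P_length : ∀ i, HasLength Λ (P i) (c i)
  two_le_c : ∀ i, 2 ≤ c i
  layer : ∀ M : ModuleCat.{0} Λ, Module.Finite Λ M → Indec Λ M → ∀ i : ZMod N,
    TopIso Λ M (S i) → radical Λ M ≠ ⊥ →
      TopIso Λ (ModuleCat.of Λ (radical Λ M)) (S (i + 1))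
  kOdd : ZMod r → ZMod N
  kEven : ZMod r → ZMod N
  kOdd_mono : ∀ j j' : ZMod r, j.val < j'.val → (kOdd j).val < (kOdd j').val
  relation_starts : ∀ v : ZMod N, (∃ j, kOdd j = v) ↔ c v ≠ c (v + 1) + 1
  relation_ends : ∀ j, kEven j + 1 = kOdd j + (c (kOdd j) : ZMod N)
  soc_min : ∀ j, SocIso Λ (P (kOdd j)) (S (kEven j))
  soc_classes : ∀ v : ZMod N, ∃ j, SocIso Λ (P v) (S (kEven j))

variable {R : Type} [CommRing R]
variable {Λ} [Algebra R Λ]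

/-- `D` is (a representative of) the module `Δ_j`: a shortest indecomposable module
with top `S_{k_{2(j-1)} + 1}` and socle `S_{k_{2j}}`. -/
def IsDelta (pres : CyclicNakayama R Λ) (j : ZMod pres.r) (D : ModuleCat.{0} Λ) : Prop :=
  Module.Finite Λ D ∧ Indec Λ D ∧
    TopIso Λ D (pres.S (pres.kEven (j - 1) + 1)) ∧ SocIso Λ D (pres.S (pres.kEven j)) ∧
    ∀ D' : ModuleCat.{0} Λ, Module.Finite Λ D' → Indec Λ D' →
      TopIso Λ D' (pres.S (pres.kEven (j - 1) + 1)) → SocIso Λ D' (pres.S (pres.kEven j)) →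
      ∀ n n' : ℕ, HasLength Λ D n → HasLength Λ D' n' → n ≤ n'

/-- `M` is a `Δ`-module: it admits a finite filtration whose successive subquotients
are isomorphic to modules among `Δ_1, …, Δ_r`. -/
def IsDeltaModule (pres : CyclicNakayama R Λ) (Δ : ZMod pres.r → ModuleCat.{0} Λ)
    (M : ModuleCat.{0} Λ) : Prop :=
  ∃ (n : ℕ) (F : Fin (n + 1) → Submodule Λ M), Monotone F ∧ F 0 = ⊥ ∧ F (Fin.last n) = ⊤ ∧
    ∀ i : Fin n, ∃ j : ZMod pres.r,
      Nonempty ((F i.succ ⧸ Submodule.comap (F i.succ).subtype (F i.castSucc)) ≃ₗ[Λ] Δ j)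

end PhiDim

namespace PhiDim

/-! ### Uniserial modules, projective covers and syzygies over a ring -/

section General

variable {Λ : Type} [Ring Λ]

lemma IsUniserial.of_injective {M N : ModuleCat.{0} Λ} (hN : IsUniserial Λ N)
    (g : M →ₗ[Λ] N) (hg : Function.Injective g) : IsUniserial Λ M := by
  intro A B
  rw [← Submodule.map_le_map_iff_of_injective hg, ← Submodule.map_le_map_iff_of_injective hg]
  exact hN _ _

lemma IsUniserial.indec {M : ModuleCat.{0} Λ} (hM : IsUniserial Λ M) (hn : Nontrivial M) :
    Indec Λ M := by
  refine ⟨hn, fun N N' h => ?_⟩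
  rcases hM N N' with hle | hle
  · left; exact le_bot_iff.1 (h.disjoint le_rfl hle)
  · right; exact le_bot_iff.1 (h.disjoint hle le_rfl)

/-- A nonzero submodule of a uniserial module has the same socle. -/
lemma socle_equiv_of_injective {M N : ModuleCat.{0} Λ} (hN : IsUniserial Λ N)
    (hM : Nontrivial M) (g : M →ₗ[Λ] N) (hg : Function.Injective g) :
    Nonempty (socle Λ M ≃ₗ[Λ] socle Λ N) := by
  have key : (socle Λ M).map g = socle Λ N := by
    have hr : LinearMap.range g ≠ ⊥ := by
      intro h
      rw [LinearMap.range_eq_bot] at h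
      obtain ⟨x, hx⟩ := exists_ne (0 : M)
      exact hx (hg (by simp [h]))
    apply le_antisymm
    · refine le_sInf fun A hA => ?_
      rw [Submodule.map_le_iff_le_comap]
      refine sInf_le ?_
      intro h
      rcases hN A (LinearMap.range g) with h' | h'
      · apply hA
        rw [← Submodule.map_comap_eq_of_le h', h, Submodule.map_bot]
      · have : (⊤ : Submodule Λ M) ≤ ⊥ := by
          rw [← h, ← Submodule.map_le_iff_le_comap, Submodule.map_top]
          exact h'
        exact bot_ne_top (le_bot_iff.1 this).symm
    · intro x hx
      obtain ⟨y, rfl⟩ : x ∈ LinearMap.range g := (sInf_le hr : socle Λ N ≤ _) hx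
      refine Submodule.mem_map_of_mem ?_
      rw [socle, Submodule.mem_sInf]
      intro A hA
      have hA' : A.map g ≠ ⊥ := fun h =>
        hA (Submodule.map_injective_of_injective hg (h.trans (Submodule.map_bot g).symm))
      obtain ⟨z, hz, hzy⟩ := (sInf_le hA' : socle Λ N ≤ _) hx
      exact hg hzy ▸ hz
  exact ⟨(Submodule.equivMapOfInjective g hg _).trans (LinearEquiv.ofEq _ _ key)⟩

lemma TopIso.congr {M N T : ModuleCat.{0} Λ} (e : M ≃ₗ[Λ] N) (h : TopIso Λ M T) :
    TopIso Λ N T := by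
  obtain ⟨t⟩ := h
  have key : (radical Λ M).map (e : M →ₗ[Λ] N) = radical Λ N := by
    apply le_antisymm
    · rw [Submodule.map_le_iff_le_comap]
      refine sSup_le fun A hA => ?_
      rw [← Submodule.map_le_iff_le_comap]
      refine le_sSup fun h' => hA ?_
      rw [← Submodule.comap_map_eq_of_injective (f := (e : M →ₗ[Λ] N)) e.injective A, h',
        Submodule.comap_top]
    · refine sSup_le fun A hA => ?_
      rw [← Submodule.map_comap_eq_of_surjective (f := (e : M →ₗ[Λ] N)) e.surjective A]
      refine Submodule.map_mono (le_sSup fun h' => hA ?_)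
      rw [← Submodule.map_comap_eq_of_surjective (f := (e : M →ₗ[Λ] N)) e.surjective A, h',
        Submodule.map_top]
      exact LinearMap.range_eq_top.2 e.surjective
  exact ⟨(Submodule.Quotient.equiv _ _ e key).symm.trans t⟩

lemma IsUniserial.radical_eq {M : ModuleCat.{0} Λ} (hM : IsUniserial Λ M)
    {K : Submodule Λ M} (hK : IsCoatom K) : radical Λ M = K := by
  apply le_antisymm
  · refine sSup_le fun A hA => ?_
    rcases hM A K with h | h
    · exact h
    · exact (hK.le_iff.1 h).elim (fun h' => absurd h' hA) (fun h' => h'.le)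
  · exact le_sSup hK.1

lemma isCoatom_ker {M T : Type} [AddCommGroup M] [Module Λ M] [AddCommGroup T] [Module Λ T]
    (f : M →ₗ[Λ] T) (hf : Function.Surjective f) (hT : IsSimpleModule Λ T) :
    IsCoatom (LinearMap.ker f) := by
  rw [← isSimpleModule_iff_isCoatom]
  exact IsSimpleModule.congr (f.quotKerEquivOfSurjective hf)

/-- A projective cover of a simple module is local, hence indecomposable. -/
lemma IsProjCover.indec {P T : ModuleCat.{0} Λ} {f : P →ₗ[Λ] T} (hf : IsProjCover Λ f)
    (hT : IsSimpleModule Λ T) : Indec Λ P := by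
  obtain ⟨-, hs, hker⟩ := hf
  have hK := isCoatom_ker f hs hT
  have aux : ∀ N N' : Submodule Λ P, IsCompl N N' → ¬ N ≤ LinearMap.ker f → N' = ⊥ := by
    intro N N' h hN
    have : N = ⊤ := hker N (hK.2 _ (right_lt_sup.2 hN))
    subst this
    exact top_disjoint.1 h.disjoint
  have := IsSimpleModule.nontrivial Λ T
  refine ⟨hs.nontrivial, fun N N' h => ?_⟩
  by_cases h1 : N ≤ LinearMap.ker f
  · left
    refine aux N' N h.symm fun h2 => hK.1 (top_le_iff.1 ?_)
    rw [← h.sup_eq_top]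
    exact sup_le h1 h2
  · right
    exact aux _ _ h h1

/-- Uniqueness of projective covers. -/
lemma IsProjCover.equiv {P Q T : ModuleCat.{0} Λ} {p : P →ₗ[Λ] T} {q : Q →ₗ[Λ] T}
    (hp : IsProjCover Λ p) (hq : IsProjCover Λ q) : Nonempty (P ≃ₗ[Λ] Q) := by
  obtain ⟨hP, hps, hpk⟩ := hp
  obtain ⟨hQ, hqs, hqk⟩ := hq
  obtain ⟨g, hg⟩ := Module.projective_lifting_property q p hqs
  have hgs : Function.Surjective g := by
    rw [← LinearMap.range_eq_top]
    refine hqk _ (top_le_iff.1 fun x _ => ?_)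
    obtain ⟨y, hy⟩ := hps (q x)
    refine Submodule.mem_sup.2 ⟨g y, ⟨y, rfl⟩, x - g y, ?_, by abel⟩
    have := LinearMap.congr_fun hg y
    simp only [LinearMap.comp_apply] at this
    simp [this, hy]
  obtain ⟨s, hs⟩ := Module.projective_lifting_property g LinearMap.id hgs
  have hs' : ∀ x, g (s x) = x := fun x => LinearMap.congr_fun hs x
  have hss : Function.Surjective s := by
    rw [← LinearMap.range_eq_top]
    refine hpk _ (top_le_iff.1 fun x _ => ?_)
    refine Submodule.mem_sup.2 ⟨s (g x), ⟨g x, rfl⟩, x - s (g x), ?_, by abel⟩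
    rw [← hg]
    simp [hs']
  exact ⟨(LinearEquiv.ofBijective s ⟨Function.LeftInverse.injective hs', hss⟩).symm⟩

lemma IsSyzygy.subsingleton {Y Z : ModuleCat.{0} Λ} (h : IsSyzygy Λ Y Z)
    (hZ : Subsingleton Z) : Subsingleton Y := by
  obtain ⟨P, f, ⟨-, -, hk⟩, ⟨e⟩⟩ := h
  have hker : LinearMap.ker f = ⊤ :=
    top_le_iff.1 fun x _ => LinearMap.mem_ker.2 (Subsingleton.elim _ _)
  have h1 : (⊥ : Submodule Λ P) = ⊤ := hk ⊥ (by simp [hker])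
  have : Subsingleton (LinearMap.ker f) := by
    rw [Submodule.subsingleton_iff_eq_bot, hker, h1]
  exact e.toEquiv.subsingleton

lemma IsNthSyzygy.subsingleton {n : ℕ} {Y Z : ModuleCat.{0} Λ} (h : IsNthSyzygy Λ n Y Z)
    (hZ : Subsingleton Z) : Subsingleton Y := by
  induction n generalizing Z with
  | zero => obtain ⟨e⟩ := h; exact e.toEquiv.subsingleton
  | succ n ih =>
    obtain ⟨W, hW, h⟩ := h
    exact ih h (hW.subsingleton hZ)

lemma IsNthSyzygy.isSyzygy {Y Z : ModuleCat.{0} Λ} (h : IsNthSyzygy Λ 1 Y Z) :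
    IsSyzygy Λ Y Z := by
  obtain ⟨W, ⟨P, f, hf, ⟨e⟩⟩, ⟨e'⟩⟩ := h
  exact ⟨P, f, hf, ⟨e'.trans e⟩⟩

end General

/-! ### Syzygies over a cyclic Nakayama algebra -/

section Nakayama

variable {R Λ : Type} [CommRing R] [Ring Λ] [Algebra R Λ]

lemma CyclicNakayama.isNoetherianRing (pres : CyclicNakayama R Λ) : IsNoetherianRing Λ := by
  have := pres.artinianBase
  have := pres.finiteAlgebra
  exact isNoetherian_of_tower R (inferInstance : IsNoetherian R Λ)

lemma CyclicNakayama.uniserial_P (pres : CyclicNakayama R Λ) (a : ZMod pres.N) :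
    IsUniserial Λ (pres.P a) := by
  obtain ⟨f, hf⟩ := pres.P_cover a
  exact pres.nakayama _ (pres.P_finite a) (hf.indec (pres.S_simple a))

/-- The projective cover of a finitely generated indecomposable module is one of the `P a`. -/
lemma CyclicNakayama.projCover_equiv (pres : CyclicNakayama R Λ) {M Q : ModuleCat.{0} Λ}
    (hfin : Module.Finite Λ M) (hind : Indec Λ M) {f : Q →ₗ[Λ] M} (hf : IsProjCover Λ f) :
    ∃ a, Nonempty (Q ≃ₗ[Λ] pres.P a) := by
  have huni := pres.nakayama M hfin hind
  have := hind.1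
  obtain ⟨K, hK, -⟩ := (eq_top_or_exists_le_coatom (⊥ : Submodule Λ M)).resolve_left bot_ne_top
  have hsimp : IsSimpleModule Λ (M ⧸ K) := isSimpleModule_iff_isCoatom.2 hK
  obtain ⟨a, ⟨e⟩⟩ := pres.S_complete (ModuleCat.of Λ (M ⧸ K)) hsimp
  obtain ⟨p, hp⟩ := pres.P_cover a
  let q : Q →ₗ[Λ] pres.S a := (e : (M ⧸ K) →ₗ[Λ] pres.S a) ∘ₗ K.mkQ ∘ₗ f
  refine ⟨a, IsProjCover.equiv (p := q) ⟨hf.1, ?_, fun N hN => hf.2.2 N ?_⟩ hp⟩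
  · exact e.surjective.comp ((Submodule.mkQ_surjective K).comp hf.2.1)
  · -- `f N` is not contained in the superfluous submodule `K`, so `f N = M`.
    have hq : LinearMap.ker q = K.comap f := by
      ext x
      simp [q]
    have h1 : N.map f ⊔ K = ⊤ := by
      have h2 := congrArg (Submodule.map f) hN
      rwa [hq, Submodule.map_sup, Submodule.map_comap_eq_of_surjective hf.2.1,
        Submodule.map_top, LinearMap.range_eq_top.2 hf.2.1] at h2
    have h3 : N.map f = ⊤ := by
      rcases huni (N.map f) K with h | h
      · exact absurd (by rwa [sup_eq_right.2 h] at h1) hK.1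
      · rwa [sup_eq_left.2 h] at h1
    rw [← Submodule.comap_map_eq, h3, Submodule.comap_top]

lemma CyclicNakayama.syzygy_embeds (pres : CyclicNakayama R Λ) {Z X : ModuleCat.{0} Λ}
    (hfin : Module.Finite Λ X) (hind : Indec Λ X) (h : IsSyzygy Λ Z X) :
    ∃ a, ∃ g : Z →ₗ[Λ] pres.P a, Function.Injective g := by
  obtain ⟨Q, f, hf, ⟨e⟩⟩ := h
  obtain ⟨a, ⟨e'⟩⟩ := pres.projCover_equiv hfin hind hf
  refine ⟨a, (e' : Q →ₗ[Λ] pres.P a) ∘ₗ (LinearMap.ker f).subtype ∘ₗ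
    (e : Z →ₗ[Λ] LinearMap.ker f), ?_⟩
  exact e'.injective.comp (Subtype.val_injective.comp e.injective)

lemma CyclicNakayama.finite_of_injective (pres : CyclicNakayama R Λ) {Z : ModuleCat.{0} Λ}
    {a : ZMod pres.N} (g : Z →ₗ[Λ] pres.P a) (hg : Function.Injective g) : Module.Finite Λ Z := by
  have := pres.isNoetherianRing
  have := pres.P_finite a
  exact Module.Finite.of_injective g hg

lemma CyclicNakayama.syzygy_finite_indec (pres : CyclicNakayama R Λ) {Z X : ModuleCat.{0} Λ}
    (hfin : Module.Finite Λ X) (hind : Indec Λ X) (h : IsSyzygy Λ Z X) (hZ : Nontrivial Z) :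
    Module.Finite Λ Z ∧ Indec Λ Z := by
  obtain ⟨a, g, hg⟩ := pres.syzygy_embeds hfin hind h
  exact ⟨pres.finite_of_injective g hg, ((pres.uniserial_P a).of_injective g hg).indec hZ⟩

lemma CyclicNakayama.syzygy_soc (pres : CyclicNakayama R Λ) {Z X : ModuleCat.{0} Λ}
    (hfin : Module.Finite Λ X) (hind : Indec Λ X) (h : IsSyzygy Λ Z X) (hZ : Nontrivial Z) :
    ∃ j, SocIso Λ Z (pres.S (pres.kEven j)) := by
  obtain ⟨a, g, hg⟩ := pres.syzygy_embeds hfin hind h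
  obtain ⟨j, ⟨e⟩⟩ := pres.soc_classes a
  obtain ⟨eZ⟩ := socle_equiv_of_injective (pres.uniserial_P a) hZ g hg
  exact ⟨j, ⟨eZ.trans e⟩⟩

/-- If `soc Z ≅ S i` and `Ω Z ≠ 0`, then `top (Ω Z) ≅ S (i + 1)`: the preimage `V` of `soc Z` in
the projective cover of `Z` has radical `Ω Z` and top `S i`. -/
lemma CyclicNakayama.syzygy_top_of_soc (pres : CyclicNakayama R Λ) {Y Z : ModuleCat.{0} Λ}
    (hfin : Module.Finite Λ Z) (hind : Indec Λ Z) (h : IsSyzygy Λ Y Z) (hY : Nontrivial Y) {i : ZMod pres.N}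
    (hsoc : SocIso Λ Z (pres.S i)) : TopIso Λ Y (pres.S (i + 1)) := by
  obtain ⟨Q, f, hf, ⟨e⟩⟩ := h
  obtain ⟨b, ⟨e'⟩⟩ := pres.projCover_equiv hfin hind hf
  obtain ⟨t⟩ := hsoc
  have := pres.S_simple i
  have hsimp : IsSimpleModule Λ (socle Λ Z) := IsSimpleModule.congr t
  let V : ModuleCat.{0} Λ := ModuleCat.of Λ ((socle Λ Z).comap f)
  let ι : V →ₗ[Λ] Q := ((socle Λ Z).comap f).subtype
  have hι : Function.Injective ι := Subtype.val_injective
  let g : V →ₗ[Λ] pres.P b := (e' : Q →ₗ[Λ] pres.P b) ∘ₗ ι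
  have hg : Function.Injective g := e'.injective.comp hι
  let φ : V →ₗ[Λ] socle Λ Z := f.restrict (fun x hx => hx)
  have hφ : Function.Surjective φ := by
    rintro ⟨z, hz⟩
    obtain ⟨x, rfl⟩ := hf.2.1 z
    exact ⟨⟨x, hz⟩, rfl⟩
  have hVu : IsUniserial Λ V := (pres.uniserial_P b).of_injective g hg
  have hVf : Module.Finite Λ V := pres.finite_of_injective g hg
  have hsn := IsSimpleModule.nontrivial Λ (socle Λ Z)
  have hVi : Indec Λ V := hVu.indec hφ.nontrivial
  have hrad : radical Λ V = LinearMap.ker φ := hVu.radical_eq (isCoatom_ker φ hφ hsimp)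
  have hker : LinearMap.ker φ = (LinearMap.ker f).comap ι := by
    ext x
    exact Subtype.ext_iff
  have hle : LinearMap.ker f ≤ (socle Λ Z).comap f := by
    intro x hx
    rw [Submodule.mem_comap, LinearMap.mem_ker.1 hx]
    exact zero_mem _
  have hradY : Nonempty (radical Λ V ≃ₗ[Λ] Y) :=
    ⟨(LinearEquiv.ofEq _ _ (hrad.trans hker)).trans
      ((Submodule.comapSubtypeEquivOfLe hle).trans e.symm)⟩
  obtain ⟨u⟩ := hradY
  have htop : TopIso Λ V (pres.S i) := by
    refine ⟨(Submodule.quotEquivOfEq _ _ hrad).trans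
      ((φ.quotKerEquivOfSurjective hφ).trans t)⟩
  have hne : radical Λ V ≠ ⊥ := by
    have : Nontrivial (radical Λ V) := u.toEquiv.nontrivial
    exact Submodule.nontrivial_iff_ne_bot.1 this
  exact TopIso.congr (M := ModuleCat.of Λ (radical Λ V)) u (pres.layer V hVf hVi i htop hne)

/-- A property of all nonzero `m`-th syzygies of finitely generated indecomposable modules holds
for all higher syzygies, because nonzero syzygies are again finitely generated indecomposable. -/
lemma CyclicNakayama.syzygy_shift (pres : CyclicNakayama R Λ) (p : ModuleCat.{0} Λ → Prop) (m : ℕ)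
    (hbase : ∀ X Y : ModuleCat.{0} Λ, Module.Finite Λ X → Indec Λ X →
      IsNthSyzygy Λ m Y X → Nontrivial Y → p Y) (i : ℕ) (hi : m ≤ i) :
    ∀ X Y : ModuleCat.{0} Λ, Module.Finite Λ X → Indec Λ X →
      IsNthSyzygy Λ i Y X → Nontrivial Y → p Y := by
  induction i, hi using Nat.le_induction with
  | base => exact hbase
  | succ n _ ih =>
    rintro X Y hfin hind ⟨Z, hZ, hYZ⟩ hY
    have hZn : Nontrivial Z := by
      by_contra hc
      have := hYZ.subsingleton (not_nontrivial_iff_subsingleton.1 hc)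
      exact not_subsingleton Y this
    obtain ⟨h1, h2⟩ := pres.syzygy_finite_indec hfin hind hZ hZn
    exact ih Z Y h1 h2 hYZ hY

end Nakayama

/-- For an indecomposable module `X` over a cyclic Nakayama algebra:
(i) for `i ≥ 1`, any nonzero `Ω^i X` has socle in `S = {S_{k_{2j}}}`;
(ii) for `i ≥ 2`, any nonzero `Ω^i X` has top in `S' = {S_{k_{2j}+1}}`. -/
theorem syzygy_soc_top_membership {R Λ : Type} [CommRing R] [Ring Λ] [Algebra R Λ]
    (pres : CyclicNakayama R Λ)
    (X : ModuleCat.{0} Λ) (hfin : Module.Finite Λ X) (hind : Indec Λ X) :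
    (∀ i : ℕ, 1 ≤ i → ∀ Y : ModuleCat.{0} Λ, IsNthSyzygy Λ i Y X → Nontrivial Y →
      ∃ j : ZMod pres.r, SocIso Λ Y (pres.S (pres.kEven j))) ∧
    (∀ i : ℕ, 2 ≤ i → ∀ Y : ModuleCat.{0} Λ, IsNthSyzygy Λ i Y X → Nontrivial Y →
      ∃ j : ZMod pres.r, TopIso Λ Y (pres.S (pres.kEven j + 1))) := by
  refine ⟨fun i hi Y => ?_, fun i hi Y => ?_⟩
  · intro h hY
    exact pres.syzygy_shift (fun Y => ∃ j, SocIso Λ Y (pres.S (pres.kEven j))) 1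
      (fun X Y hf hd h hY => pres.syzygy_soc hf hd h.isSyzygy hY) i hi X Y hfin hind h hY
  · intro h hY
    refine pres.syzygy_shift (fun Y => ∃ j, TopIso Λ Y (pres.S (pres.kEven j + 1))) 2
      ?_ i hi X Y hfin hind h hY
    rintro X Y hf hd ⟨Z, hZ, hYZ⟩ hY
    have hZn : Nontrivial Z := by
      by_contra hc
      have := hYZ.subsingleton (not_nontrivial_iff_subsingleton.1 hc)
      exact not_subsingleton Y this
    obtain ⟨h1, h2⟩ := pres.syzygy_finite_indec hf hd hZ hZn
    obtain ⟨j, hj⟩ := pres.syzygy_soc hf hd hZ hZn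
    exact ⟨j, pres.syzygy_top_of_soc h1 h2 hYZ.isSyzygy hY hj⟩

end PhiDim
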